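/- Let b ≥ 5 be squarefree and let a be a positive integer with 1 < a < b that is not an integral power of b. Then p_{a,b}(n) = (b − ⌊(b−1)/a⌋ − gcd(a,b))·n + ⌊(b−1)/a⌋ + gcd(a,b) − 1 for all n ≥ 1. -/

import Mathlib

/-- The leading digit of `x` in base `b`: the unique `d ∈ {1,…,b-1}` with
`d · b^k ≤ x < (d+1) · b^k` for some integer `k` (here `k = ⌊log_b x⌋`). -/
noncomputable def leadingDigit (b : ℕ) (x : ℝ) : ℕ :=
  (⌊x / (b : ℝ) ^ (⌊Real.logb b x⌋ : ℤ)⌋).toNat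

/-- The block complexity of the leading digit sequence of `a^n` in base `b`:
the number of distinct blocks of length `n`. -/
noncomputable def blockComplexity (a : ℝ) (b : ℕ) (n : ℕ) : ℕ :=
  Set.ncard {w : Fin n → ℕ |
    ∃ m : ℕ, 1 ≤ m ∧ ∀ i : Fin n, w i = leadingDigit b (a ^ (m + (i : ℕ)))}

/-!
Multiplication by a power of `b` does not change leading digits, so the block starting at `a ^ m`
depends only on the mantissa of `a ^ m`, and the block of a mantissa `x` changes exactly when
`x * a ^ i` passes some `d * b ^ k` with `1 ≤ d < b` and `i < n`. The mantissas at which this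
happens cut `[1, b)` into half-open intervals. Different intervals carry different blocks, and, as
`log_b a` is irrational, the mantissas of the powers of `a` meet every interval, so the complexity
is the number of these breakpoints. Passing from `n` to `n + 1` adds the `b - 1` mantissas of
`d / a ^ n`. For squarefree `b`, the one for the digit `d` has occurred before iff `a ∣ d`, or
`d < a` and `a ∣ d * b`, and there are `(b - 1) / a + (gcd a b - 1)` such digits.
-/

open Filter Set Topology
open scoped Finset

section Mantissa

variable {b x y : ℝ}

/-- The mantissa of `x` in base `b`: for `x > 0`, the representative of `x` in `[1, b)` modulo
multiplication by integer powers of `b`. -/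
noncomputable def mantissa (b x : ℝ) : ℝ :=
  x / b ^ ⌊Real.logb b x⌋

theorem mantissa_mul_zpow (hb : 1 < b) (hx : x ≠ 0) (k : ℤ) :
    mantissa b (x * b ^ k) = mantissa b x := by
  have hb0 : b ≠ 0 := by positivity
  have hlog : Real.logb b (x * b ^ k) = Real.logb b x + k := by
    rw [Real.logb_mul hx (zpow_ne_zero k hb0), ← Real.rpow_intCast,
      Real.logb_rpow (by positivity) hb.ne']
  rw [mantissa, mantissa, hlog, Int.floor_add_intCast, zpow_add₀ hb0,
    mul_div_mul_right _ _ (zpow_ne_zero k hb0)]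

theorem mantissa_of_mem_Ico (hx : x ∈ Ico 1 b) : mantissa b x = x := by
  have hb : 1 < b := hx.1.trans_lt hx.2
  have hfloor : ⌊Real.logb b x⌋ = 0 := by
    refine Int.floor_eq_zero_iff.2 ⟨Real.logb_nonneg hb hx.1, ?_⟩
    rw [Real.logb_lt_iff_lt_rpow hb (zero_lt_one.trans_le hx.1), Real.rpow_one]
    exact hx.2
  rw [mantissa, hfloor, zpow_zero, div_one]

theorem mantissa_mul_zpow_floor_logb (hb : 0 < b) (x : ℝ) :
    mantissa b x * b ^ ⌊Real.logb b x⌋ = x :=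
  div_mul_cancel₀ x (zpow_ne_zero _ hb.ne')

theorem mantissa_mem_Ico (hb : 1 < b) (hx : 0 < x) : mantissa b x ∈ Ico 1 b := by
  have hb0 : 0 < b := by positivity
  have hpow : 0 < b ^ ⌊Real.logb b x⌋ := zpow_pos hb0 _
  constructor
  · rw [mantissa, one_le_div hpow, ← Real.rpow_intCast, ← Real.le_logb_iff_rpow_le hb hx]
    exact Int.floor_le _
  · rw [mantissa, div_lt_iff₀' hpow, ← zpow_add_one₀ hb0.ne', ← Real.rpow_intCast,
      ← Real.logb_lt_iff_lt_rpow hb hx, Int.cast_add, Int.cast_one]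
    exact Int.lt_floor_add_one _

theorem mantissa_eq_mantissa_iff (hb : 1 < b) (hx : x ≠ 0) :
    mantissa b x = mantissa b y ↔ ∃ k : ℤ, y = x * b ^ k := by
  have hb0 : 0 < b := by positivity
  constructor
  · intro h
    refine ⟨-⌊Real.logb b x⌋ + ⌊Real.logb b y⌋, ?_⟩
    calc y = mantissa b y * b ^ ⌊Real.logb b y⌋ := (mantissa_mul_zpow_floor_logb hb0 y).symm
      _ = x / b ^ ⌊Real.logb b x⌋ * b ^ ⌊Real.logb b y⌋ := by rw [← h, mantissa]
      _ = x * b ^ (-⌊Real.logb b x⌋ + ⌊Real.logb b y⌋) := by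
        rw [zpow_add₀ hb0.ne', zpow_neg, div_eq_mul_inv, mul_assoc]
  · rintro ⟨k, rfl⟩
    exact (mantissa_mul_zpow hb hx k).symm

end Mantissa

section LeadingDigit

variable {b d e : ℕ} {x y : ℝ}

theorem leadingDigit_eq_floor_mantissa (b : ℕ) (x : ℝ) : leadingDigit b x = ⌊mantissa b x⌋₊ :=
  Int.floor_toNat _

theorem leadingDigit_of_mem_Ico (hx : x ∈ Ico 1 (b : ℝ)) : leadingDigit b x = ⌊x⌋₊ := by
  rw [leadingDigit_eq_floor_mantissa, mantissa_of_mem_Ico hx]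

theorem leadingDigit_mul_zpow (hb : 1 < b) (hx : x ≠ 0) (k : ℤ) :
    leadingDigit b (x * (b : ℝ) ^ k) = leadingDigit b x := by
  rw [leadingDigit_eq_floor_mantissa, leadingDigit_eq_floor_mantissa,
    mantissa_mul_zpow (Nat.one_lt_cast.2 hb) hx]

theorem leadingDigit_mem_Ico (hb : 1 < b) (hx : 0 < x) : leadingDigit b x ∈ Finset.Ico 1 b := by
  obtain ⟨hone, hlt⟩ := mantissa_mem_Ico (Nat.one_lt_cast.2 hb) hx
  rw [leadingDigit_eq_floor_mantissa, Finset.mem_Ico, Nat.one_le_floor_iff,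
    Nat.floor_lt (zero_le_one.trans hone)]
  exact ⟨hone, hlt⟩

theorem leadingDigit_eq_iff (hb : 1 < b) (hx : 0 < x) (hd : d ∈ Finset.Ico 1 b) :
    leadingDigit b x = d ↔ ∃ k : ℤ, x ∈ Ico (d * (b : ℝ) ^ k) ((d + 1) * (b : ℝ) ^ k) := by
  have hb0 : (0 : ℝ) < b := by positivity
  obtain ⟨hd1, hdb⟩ := Finset.mem_Ico.1 hd
  constructor
  · intro h
    have hpow : 0 < (b : ℝ) ^ ⌊Real.logb b x⌋ := zpow_pos hb0 _
    rw [leadingDigit_eq_floor_mantissa, Nat.floor_eq_iff' (by lia), mantissa,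
      le_div_iff₀ hpow, div_lt_iff₀ hpow] at h
    exact ⟨_, h⟩
  · rintro ⟨k, hle, hlt⟩
    have hpow : 0 < (b : ℝ) ^ k := zpow_pos hb0 k
    have hd1' : (1 : ℝ) ≤ d := Nat.one_le_cast.2 hd1
    have hdb' : (d : ℝ) + 1 ≤ b := mod_cast hdb
    rw [← le_div_iff₀ hpow] at hle
    rw [← div_lt_iff₀ hpow] at hlt
    rw [← div_mul_cancel₀ x hpow.ne', leadingDigit_mul_zpow hb (by positivity),
      leadingDigit_of_mem_Ico ⟨hd1'.trans hle, hlt.trans_le hdb'⟩, Nat.floor_eq_iff' (by lia)]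
    exact ⟨hle, hlt⟩

theorem leadingDigit_natCast_mul_zpow (hd : d ∈ Finset.Ico 1 b) (k : ℤ) :
    leadingDigit b (d * (b : ℝ) ^ k) = d := by
  obtain ⟨hd1, hdb⟩ := Finset.mem_Ico.1 hd
  rw [leadingDigit_mul_zpow (by lia) (by positivity),
    leadingDigit_of_mem_Ico ⟨Nat.one_le_cast.2 hd1, Nat.cast_lt.2 hdb⟩, Nat.floor_natCast]

theorem eq_of_natCast_eq_mul_zpow (hd : d ∈ Finset.Ico 1 b) (he : e ∈ Finset.Ico 1 b) {k : ℤ}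
    (h : (e : ℝ) = d * (b : ℝ) ^ k) : d = e := by
  have heq : leadingDigit b (e * (b : ℝ) ^ (0 : ℤ)) = e := leadingDigit_natCast_mul_zpow he 0
  rwa [zpow_zero, mul_one, h, leadingDigit_natCast_mul_zpow hd] at heq

theorem leadingDigit_eventually_eq_nhdsGT (hb : 1 < b) (hx : 0 < x) :
    ∀ᶠ y in 𝓝[>] x, leadingDigit b y = leadingDigit b x := by
  have hmem := leadingDigit_mem_Ico hb hx
  obtain ⟨k, hle, hlt⟩ := (leadingDigit_eq_iff hb hx hmem).1 rfl
  filter_upwards [Ioo_mem_nhdsGT hlt] with y hy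
  exact (leadingDigit_eq_iff hb (hx.trans hy.1) hmem).2 ⟨k, hle.trans hy.1.le, hy.2⟩

theorem lt_two_mul_of_leadingDigit_eq (hx : x ∈ Ico 1 (b : ℝ)) (hy : y ∈ Ico 1 (b : ℝ))
    (h : leadingDigit b x = leadingDigit b y) : y < 2 * x := by
  rw [leadingDigit_of_mem_Ico hx, leadingDigit_of_mem_Ico hy] at h
  have hfloor : (1 : ℝ) ≤ ⌊x⌋₊ := Nat.one_le_cast.2 ((Nat.one_le_floor_iff x).2 hx.1)
  calc y < ⌊x⌋₊ + 1 := h ▸ Nat.lt_floor_add_one y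
    _ ≤ 2 * ⌊x⌋₊ := by linarith
    _ ≤ 2 * x := by gcongr; exact Nat.floor_le (zero_le_one.trans hx.1)

theorem leadingDigit_ne_of_lt_mul_zpow (hb : 4 ≤ b) (hd : d ∈ Finset.Ico 1 b) {k : ℤ}
    (hlt : x < d * (b : ℝ) ^ k) (hgt : d * (b : ℝ) ^ k < 2 * x) : leadingDigit b x ≠ d := by
  intro h
  have hb' : (4 : ℝ) ≤ b := mod_cast hb
  have hd1 : (1 : ℝ) ≤ d := Nat.one_le_cast.2 (Finset.mem_Ico.1 hd).1
  have hx : 0 < x := by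
    have : 0 < (d : ℝ) * (b : ℝ) ^ k := by positivity
    linarith
  obtain ⟨j, hj⟩ := (leadingDigit_eq_iff (by lia) hx hd).1 h
  have hjk : j + 1 ≤ k := by
    have hpow : (b : ℝ) ^ j < (b : ℝ) ^ k :=
      lt_of_mul_lt_mul_left (hj.1.trans_lt hlt) (by positivity)
    exact (zpow_lt_zpow_iff_right₀ (by linarith)).1 hpow
  have hpow : 0 < (b : ℝ) ^ j := by positivity
  refine hgt.not_ge ?_
  calc 2 * x ≤ 2 * ((d + 1) * (b : ℝ) ^ j) := by gcongr; exact hj.2.le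
    _ ≤ d * ((b : ℝ) ^ j * 4) := by nlinarith
    _ ≤ d * (b : ℝ) ^ (j + 1) := by rw [zpow_add_one₀ (by positivity)]; gcongr
    _ ≤ d * (b : ℝ) ^ k := by gcongr; linarith

end LeadingDigit

section Breakpoint

variable {a x : ℝ} {b d e i n : ℕ}

/-- The mantissa at which the leading digit of `x * a ^ i` in base `b` jumps to `d`, as `x`
increases through `[1, b)`. -/
noncomputable def breakpoint (a : ℝ) (b i d : ℕ) : ℝ :=
  mantissa b (d / a ^ i)

/-- The breakpoints of the `n`-blocks of leading digits: the mantissas at which one of the digits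
of `x, x * a, …, x * a ^ (n - 1)` in base `b` jumps. -/
noncomputable def breakpoints (a : ℝ) (b n : ℕ) : Finset ℝ :=
  (Finset.range n ×ˢ Finset.Ico 1 b).image fun q ↦ breakpoint a b q.1 q.2

theorem mem_breakpoints :
    x ∈ breakpoints a b n ↔ ∃ i < n, ∃ d ∈ Finset.Ico 1 b, breakpoint a b i d = x := by
  simp only [breakpoints, Finset.mem_image, Finset.mem_product, Finset.mem_range, Prod.exists,
    and_assoc, exists_and_left]

theorem breakpoints_succ (a : ℝ) (b n : ℕ) :
    breakpoints a b (n + 1) =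
      breakpoints a b n ∪ (Finset.Ico 1 b).image (breakpoint a b n) := by
  ext x
  simp only [mem_breakpoints, Finset.mem_union, Finset.mem_image, Nat.lt_succ_iff_lt_or_eq,
    or_and_right, exists_or, exists_eq_left]

theorem breakpoint_eq_iff (ha : 0 < a) (hb : 1 < b) (hd : d ∈ Finset.Ico 1 b)
    (hx : x ∈ Ico 1 (b : ℝ)) :
    breakpoint a b i d = x ↔ ∃ k : ℤ, x * a ^ i = d * (b : ℝ) ^ k := by
  have hd0 : (0 : ℝ) < d := Nat.cast_pos.2 (Finset.mem_Ico.1 hd).1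
  rw [breakpoint, ← mantissa_of_mem_Ico hx,
    mantissa_eq_mantissa_iff (Nat.one_lt_cast.2 hb) (by positivity), mantissa_of_mem_Ico hx]
  refine exists_congr fun k ↦ ?_
  rw [← eq_div_iff (by positivity), div_mul_eq_mul_div]

theorem breakpoint_eq_breakpoint_iff (ha : 0 < a) (hb : 1 < b) (hd : d ∈ Finset.Ico 1 b) (t : ℕ) :
    breakpoint a b (i + t) d = breakpoint a b i e ↔
      ∃ k : ℤ, e * a ^ t = d * (b : ℝ) ^ k := by
  have hd0 : (0 : ℝ) < d := Nat.cast_pos.2 (Finset.mem_Ico.1 hd).1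
  rw [breakpoint, breakpoint,
    mantissa_eq_mantissa_iff (Nat.one_lt_cast.2 hb) (by positivity)]
  refine exists_congr fun k ↦ ?_
  rw [pow_add]
  field_simp

theorem breakpoint_mem_Ico (ha : 0 < a) (hb : 1 < b) (hd : d ∈ Finset.Ico 1 b) (i : ℕ) :
    breakpoint a b i d ∈ Ico 1 (b : ℝ) := by
  have hd0 : (0 : ℝ) < d := Nat.cast_pos.2 (Finset.mem_Ico.1 hd).1
  exact mantissa_mem_Ico (Nat.one_lt_cast.2 hb) (by positivity)

theorem mem_Ico_of_mem_breakpoints (ha : 0 < a) (hb : 1 < b) (hx : x ∈ breakpoints a b n) :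
    x ∈ Ico 1 (b : ℝ) := by
  obtain ⟨i, -, d, hd, rfl⟩ := mem_breakpoints.1 hx
  exact breakpoint_mem_Ico ha hb hd i

theorem one_mem_breakpoints (ha : 0 < a) (hb : 1 < b) (hn : n ≠ 0) : 1 ∈ breakpoints a b n := by
  have hone : 1 ∈ Finset.Ico 1 b := Finset.mem_Ico.2 ⟨le_rfl, hb⟩
  refine mem_breakpoints.2 ⟨0, Nat.pos_of_ne_zero hn, 1, hone, ?_⟩
  exact (breakpoint_eq_iff ha hb hone ⟨le_rfl, Nat.one_lt_cast.2 hb⟩).2 ⟨0, by simp⟩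

theorem breakpoint_injOn (ha : 0 < a) (hb : 1 < b) (i : ℕ) :
    InjOn (breakpoint a b i) (Finset.Ico 1 b) := by
  intro d hd e he h
  obtain ⟨k, hk⟩ := (breakpoint_eq_breakpoint_iff ha hb hd 0).1 h
  rw [pow_zero, mul_one] at hk
  exact eq_of_natCast_eq_mul_zpow hd he hk

theorem card_image_breakpoint (ha : 0 < a) (hb : 1 < b) (i : ℕ) :
    #((Finset.Ico 1 b).image (breakpoint a b i)) = b - 1 := by
  rw [Finset.card_image_of_injOn (breakpoint_injOn ha hb i), Nat.card_Ico]

theorem card_breakpoints_one (ha : 0 < a) (hb : 1 < b) : #(breakpoints a b 1) = b - 1 := by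
  rw [← card_image_breakpoint ha hb 0, breakpoints_succ]
  simp [breakpoints]

end Breakpoint

section DigitBlock

variable {a x : ℝ} {b n : ℕ}

/-- The `n`-block of leading digits in base `b` that starts at `x`, that is, the leading digits of
`x, x * a, …, x * a ^ (n - 1)`. -/
noncomputable def digitBlock (a : ℝ) (b n : ℕ) (x : ℝ) : Fin n → ℕ :=
  fun i ↦ leadingDigit b (x * a ^ (i : ℕ))

theorem digitBlock_mul_zpow (ha : a ≠ 0) (hb : 1 < b) (hx : x ≠ 0) (k : ℤ) :
    digitBlock a b n (x * (b : ℝ) ^ k) = digitBlock a b n x := by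
  funext i
  rw [digitBlock, digitBlock, mul_right_comm, leadingDigit_mul_zpow hb (by positivity)]

theorem digitBlock_mantissa (ha : a ≠ 0) (hb : 1 < b) (hx : 0 < x) :
    digitBlock a b n (mantissa b x) = digitBlock a b n x := by
  have hmant := mantissa_mem_Ico (Nat.one_lt_cast.2 hb) hx
  rw [← digitBlock_mul_zpow ha hb (by linarith [hmant.1]) ⌊Real.logb b x⌋,
    mantissa_mul_zpow_floor_logb (by positivity)]

theorem digitBlock_eventually_eq_nhdsGT (ha : 0 < a) (hb : 1 < b) (hx : 0 < x) :
    ∀ᶠ y in 𝓝[>] x, digitBlock a b n y = digitBlock a b n x := by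
  have hdigit : ∀ᶠ y in 𝓝[>] x, ∀ i : Fin n,
      leadingDigit b (y * a ^ (i : ℕ)) = leadingDigit b (x * a ^ (i : ℕ)) := by
    refine eventually_all.2 fun i ↦ ?_
    have hpow : 0 < a ^ (i : ℕ) := by positivity
    have htendsto : Tendsto (· * a ^ (i : ℕ)) (𝓝[>] x) (𝓝[>] (x * a ^ (i : ℕ))) :=
      ((continuous_mul_const _).continuousWithinAt).tendsto_nhdsWithin
        fun y hy ↦ mul_lt_mul_of_pos_right hy hpow
    exact htendsto.eventually (leadingDigit_eventually_eq_nhdsGT hb (by positivity))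
  filter_upwards [hdigit] with y hy
  exact funext hy

theorem exists_mem_breakpoints_digitBlock_eq (ha : 0 < a) (hb : 1 < b) (hn : n ≠ 0)
    (hx : x ∈ Ico 1 (b : ℝ)) :
    ∃ p ∈ breakpoints a b n, digitBlock a b n p = digitBlock a b n x := by
  have hone := one_mem_breakpoints ha hb hn
  obtain ⟨p, hp, hmax⟩ := {p ∈ breakpoints a b n | p ≤ x}.exists_max_image id
    ⟨1, Finset.mem_filter.2 ⟨hone, hx.1⟩⟩
  obtain ⟨hp, hpx⟩ := Finset.mem_filter.1 hp
  replace hmax : ∀ q ∈ breakpoints a b n, q ≤ x → q ≤ p := fun q hq hqx ↦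
    hmax q (Finset.mem_filter.2 ⟨hq, hqx⟩)
  have hp1 : 1 ≤ p := hmax 1 hone hx.1
  refine ⟨p, hp, funext fun i ↦ ?_⟩
  have hpow : 0 < a ^ (i : ℕ) := by positivity
  have hx0 : 0 < x * a ^ (i : ℕ) := mul_pos (zero_lt_one.trans_le hx.1) hpow
  have hdigit := leadingDigit_mem_Ico hb hx0
  obtain ⟨k, hle, hlt⟩ := (leadingDigit_eq_iff hb hx0 hdigit).1 rfl
  refine (leadingDigit_eq_iff hb (by positivity) hdigit).2 ⟨k, ?_, ?_⟩
  · rw [← div_le_iff₀ hpow] at hle ⊢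
    set q := leadingDigit b (x * a ^ (i : ℕ)) * (b : ℝ) ^ k / a ^ (i : ℕ)
    rcases le_or_gt 1 q with hq1 | hq1
    · refine hmax q (mem_breakpoints.2 ⟨i, i.is_lt, _, hdigit, ?_⟩) hle
      exact (breakpoint_eq_iff ha hb hdigit ⟨hq1, hle.trans_lt hx.2⟩).2
        ⟨k, div_mul_cancel₀ _ hpow.ne'⟩
    · exact hq1.le.trans hp1
  · exact lt_of_le_of_lt (by gcongr) hlt

theorem digitBlock_injOn_breakpoints (ha : 0 < a) (hb : 4 ≤ b) :
    InjOn (digitBlock a b n) (breakpoints a b n) := by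
  have hb1 : 1 < b := by lia
  intro p hp q hq h
  by_contra hne
  wlog hpq : p < q generalizing p q
  · exact this hq hp h.symm (Ne.symm hne) ((Ne.symm hne).lt_of_le (not_lt.1 hpq))
  have hpmem := mem_Ico_of_mem_breakpoints ha hb1 hp
  have hqmem := mem_Ico_of_mem_breakpoints ha hb1 hq
  obtain ⟨i, hi, d, hd, hqd⟩ := mem_breakpoints.1 hq
  obtain ⟨k, hk⟩ := (breakpoint_eq_iff ha hb1 hd hqmem).1 hqd
  have hfirst : leadingDigit b p = leadingDigit b q := by
    simpa [digitBlock] using congrFun h ⟨0, by lia⟩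
  have hdigit : leadingDigit b (p * a ^ i) = d := by
    rw [← leadingDigit_natCast_mul_zpow hd k, ← hk]
    exact congrFun h ⟨i, hi⟩
  refine leadingDigit_ne_of_lt_mul_zpow hb hd (k := k) ?_ ?_ hdigit
  · rw [← hk]
    gcongr
  · rw [← hk, ← mul_assoc]
    gcongr
    exact lt_two_mul_of_leadingDigit_eq hpmem hqmem hfirst

end DigitBlock

section Complexity

variable {a x y : ℝ} {b n : ℕ}

theorem exists_natCast_mul_add_intCast_mem_Ioo {α : ℝ} (hα : Irrational α) (hxy : x < y) :
    ∃ m : ℕ, 1 ≤ m ∧ ∃ k : ℤ, m * α + k ∈ Ioo x y := by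
  have hdense : DenseRange fun m : ℕ ↦ m • (α : UnitAddCircle) :=
    denseRange_zsmul_iff_nsmul.1 (AddCircle.denseRange_zsmul_coe_iff.2 (by rwa [div_one]))
  have hopen : IsOpen (((↑) : ℝ → UnitAddCircle) '' Ioo (x - α) (y - α)) :=
    QuotientAddGroup.isOpenMap_coe _ isOpen_Ioo
  obtain ⟨m, z, hz, hzm⟩ := hdense.exists_mem_open hopen
    ((nonempty_Ioo.2 (sub_lt_sub_right hxy α)).image _)
  obtain ⟨k, hk⟩ : ∃ k : ℤ, k • (1 : ℝ) = z - m • α := by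
    rw [← AddCircle.coe_eq_zero_iff, AddCircle.coe_sub, AddCircle.coe_nsmul, sub_eq_zero]
    exact hzm
  have hz_eq : (m + 1 : ℕ) * α + k = z + α := by
    simp only [zsmul_eq_mul, mul_one, nsmul_eq_mul] at hk
    rw [hk]
    push_cast
    ring
  refine ⟨m + 1, by lia, k, ?_⟩
  rw [hz_eq]
  exact ⟨sub_lt_iff_lt_add.1 hz.1, lt_sub_iff_add_lt.1 hz.2⟩

theorem exists_pow_mul_zpow_mem_Ioo {β : ℝ} (ha : 0 < a) (hβ : 1 < β)
    (hirr : Irrational (Real.logb β a)) (hx : 0 < x) (hxy : x < y) :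
    ∃ m : ℕ, 1 ≤ m ∧ ∃ k : ℤ, a ^ m * β ^ k ∈ Ioo x y := by
  have hβ0 : 0 < β := by positivity
  obtain ⟨m, hm, k, hmk⟩ :=
    exists_natCast_mul_add_intCast_mem_Ioo hirr (Real.logb_lt_logb hβ hx hxy)
  refine ⟨m, hm, k, ?_⟩
  have hpow : a ^ m * β ^ k = β ^ (m * Real.logb β a + k) := by
    rw [Real.rpow_add hβ0, Real.rpow_intCast, mul_comm (m : ℝ), Real.rpow_mul hβ0.le,
      Real.rpow_logb hβ0 hβ.ne' ha, Real.rpow_natCast]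
  rw [hpow]
  exact ⟨(Real.logb_lt_iff_lt_rpow hβ hx).1 hmk.1,
    (Real.lt_logb_iff_rpow_lt hβ (hx.trans hxy)).1 hmk.2⟩

theorem setOf_block_eq_image_digitBlock (ha : 0 < a) (hb : 1 < b)
    (hirr : Irrational (Real.logb b a)) (hn : n ≠ 0) :
    {w : Fin n → ℕ | ∃ m : ℕ, 1 ≤ m ∧ ∀ i : Fin n, w i = leadingDigit b (a ^ (m + (i : ℕ)))} =
      digitBlock a b n '' breakpoints a b n := by
  have hblock : ∀ (m : ℕ) (w : Fin n → ℕ),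
      (∀ i : Fin n, w i = leadingDigit b (a ^ (m + (i : ℕ)))) ↔ w = digitBlock a b n (a ^ m) := by
    intro m w
    simp only [funext_iff, digitBlock, pow_add]
  ext w
  simp only [hblock]
  constructor
  · rintro ⟨m, -, rfl⟩
    obtain ⟨p, hp, hpm⟩ := exists_mem_breakpoints_digitBlock_eq ha hb hn
      (mantissa_mem_Ico (Nat.one_lt_cast.2 hb) (pow_pos ha m))
    exact ⟨p, hp, hpm.trans (digitBlock_mantissa ha.ne' hb (pow_pos ha m))⟩
  · rintro ⟨p, hp, rfl⟩
    have hp0 : 0 < p := zero_lt_one.trans_le (mem_Ico_of_mem_breakpoints ha hb hp).1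
    obtain ⟨q, hpq, hq⟩ := mem_nhdsGT_iff_exists_Ioo_subset.1
      (digitBlock_eventually_eq_nhdsGT (n := n) ha hb hp0)
    obtain ⟨m, hm, k, hmk⟩ :=
      exists_pow_mul_zpow_mem_Ioo ha (Nat.one_lt_cast.2 hb) hirr hp0 hpq
    refine ⟨m, hm, ?_⟩
    rw [← digitBlock_mul_zpow ha.ne' hb (pow_ne_zero m ha.ne') k]
    exact (hq hmk).symm

theorem blockComplexity_eq_card_breakpoints (ha : 0 < a) (hb : 4 ≤ b)
    (hirr : Irrational (Real.logb b a)) (hn : n ≠ 0) :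
    blockComplexity a b n = #(breakpoints a b n) := by
  rw [blockComplexity, setOf_block_eq_image_digitBlock ha (by lia) hirr hn,
    (digitBlock_injOn_breakpoints ha hb).ncard_image, ncard_coe_finset]

end Complexity

section Squarefree

variable {a b : ℕ}

theorem exists_eq_pow_of_pow_eq_pow_of_squarefree {m q : ℕ} (hb : Squarefree b) (hq : q ≠ 0)
    (h : a ^ q = b ^ m) : ∃ j, a = b ^ j := by
  obtain ⟨c, hac, hbc⟩ := Nat.exists_eq_pow_of_pow_eq_pow (Or.inl hq) h
  have hexp : q / q.gcd m ≠ 0 := (Nat.div_pos (Nat.gcd_le_left m (by lia)) (by positivity)).ne'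
  rcases eq_or_ne c 1 with rfl | hc
  · exact ⟨0, by rw [hac, one_pow, pow_zero]⟩
  · obtain ⟨-, hone⟩ := (Nat.squarefree_pow_iff hc hexp).1 (hbc ▸ hb)
    rw [hone, pow_one] at hbc
    exact ⟨_, hbc ▸ hac⟩

theorem irrational_logb_of_squarefree (ha : 1 < a) (hb : 1 < b) (hsf : Squarefree b)
    (hpow : ∀ j : ℕ, a ≠ b ^ j) : Irrational (Real.logb b a) := by
  have hb1 : (1 : ℝ) < b := Nat.one_lt_cast.2 hb
  rintro ⟨r, hr⟩
  have hr0 : 0 < r := by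
    rw [← Rat.cast_pos (K := ℝ), hr]
    exact Real.logb_pos hb1 (Nat.one_lt_cast.2 ha)
  lift r to ℚ≥0 using hr0.le
  have hreal : (a : ℝ) ^ r.den = (b : ℝ) ^ r.num := by
    have hmul : r.den * Real.logb b a = r.num := by
      rw [← hr]
      exact_mod_cast r.den_mul_eq_num
    rw [← Real.rpow_natCast (b : ℝ), ← hmul, ← Real.logb_pow,
      Real.rpow_logb (by positivity) hb1.ne' (by positivity)]
  obtain ⟨j, hj⟩ := exists_eq_pow_of_pow_eq_pow_of_squarefree hsf r.den_ne_zero (mod_cast hreal)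
  exact hpow j hj

theorem dvd_of_pow_succ_dvd_mul_pow {d k : ℕ} (hb : Squarefree b) (h : a ^ (k + 1) ∣ d * b ^ k) :
    a ∣ d := by
  rcases eq_or_ne d 0 with rfl | hd
  · exact dvd_zero a
  have hprod : d * b ^ k ≠ 0 := mul_ne_zero hd (pow_ne_zero k hb.ne_zero)
  have ha : a ≠ 0 := by
    rintro rfl
    exact hprod (by simpa using h)
  rw [← Nat.factorization_prime_le_iff_dvd ha hd]
  intro p _
  have hval : (k + 1) * a.factorization p ≤ d.factorization p + k * b.factorization p := by
    simpa [Nat.factorization_mul hd (pow_ne_zero k hb.ne_zero)] using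
      (Nat.factorization_le_iff_dvd (pow_ne_zero _ ha) hprod).2 h p
  have hbp : k * b.factorization p ≤ k :=
    mul_le_of_le_one_right (Nat.zero_le k) (hb.natFactorization_le_one p)
  rcases Nat.eq_zero_or_pos (a.factorization p) with hap | hap
  · lia
  · have : k ≤ k * a.factorization p := Nat.le_mul_of_pos_right k hap
    lia

theorem dvd_mul_of_pow_dvd_mul_pow {d t : ℕ} (ht : t ≠ 0) (h : a ^ t ∣ d * b ^ t) :
    a ∣ d * b := by
  rw [← Nat.pow_dvd_pow_iff ht, mul_pow]
  exact h.trans (mul_dvd_mul_right (dvd_pow_self d ht) _)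

end Squarefree

section RedundantDigits

variable {a b d e n t : ℕ}

/-- The digits `d` for which, when `b` is squarefree, the breakpoint of the digit `d` at any
position other than the first is already a breakpoint of an earlier position. -/
def redundantDigits (a b : ℕ) : Finset ℕ :=
  {d ∈ Finset.Ico 1 b | a ∣ d ∨ d < a ∧ a ∣ d * b}

theorem card_redundantDigits (ha : 0 < a) (hab : a ≤ b) :
    #(redundantDigits a b) = (b - 1) / a + (a.gcd b - 1) := by
  have hdisj : Disjoint {d ∈ Finset.Ico 1 b | a ∣ d} {d ∈ Finset.Ico 1 b | d < a ∧ a ∣ d * b} := by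
    refine Finset.disjoint_filter.2 fun d hd hdvd hlt ↦ ?_
    exact hlt.1.not_ge (Nat.le_of_dvd (Finset.mem_Ico.1 hd).1 hdvd)
  have hmultiples : #{d ∈ Finset.Ico 1 b | a ∣ d} = (b - 1) / a := by
    have hIco : Finset.Ico 1 b = Finset.Ioc 0 (b - 1) := by
      ext d
      simp only [Finset.mem_Ico, Finset.mem_Ioc]
      lia
    rw [hIco, Nat.Ioc_filter_dvd_card_eq_div]
  have hsmall : #{d ∈ Finset.Ico 1 b | d < a ∧ a ∣ d * b} = a.gcd b - 1 := by
    have hg : 0 < a.gcd b := Nat.gcd_pos_of_pos_left b ha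
    have hga : a / a.gcd b * a.gcd b = a := Nat.div_mul_cancel (Nat.gcd_dvd_left a b)
    have hdvd : ∀ d, a ∣ d * b ↔ a / a.gcd b ∣ d := fun d ↦ by
      rw [Nat.div_dvd_iff_dvd_mul (Nat.gcd_dvd_left a b) hg, Nat.dvd_gcd_mul_iff_dvd_mul, mul_comm]
    have hset : {d ∈ Finset.Ico 1 b | d < a ∧ a ∣ d * b} =
        {d ∈ Finset.Ioc 0 (a - 1) | a / a.gcd b ∣ d} := by
      ext d
      simp only [Finset.mem_filter, Finset.mem_Ico, Finset.mem_Ioc, hdvd]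
      lia
    have hdiv : (a - 1) / (a / a.gcd b) = a.gcd b - 1 := by
      simpa [hga] using Nat.mul_sub_div 0 (a / a.gcd b) (a.gcd b) (by lia)
    rw [hset, Nat.Ioc_filter_dvd_card_eq_div, hdiv]
  rw [redundantDigits, Finset.filter_or, Finset.card_union_of_disjoint hdisj, hmultiples, hsmall]

theorem nonneg_and_le_of_mul_pow_eq_mul_zpow (ha : 0 < a) (hab : a ≤ b)
    (hd : d ∈ Finset.Ico 1 b) (he : e ∈ Finset.Ico 1 b) {k : ℤ}
    (h : (e : ℝ) * a ^ t = d * (b : ℝ) ^ k) : 0 ≤ k ∧ k ≤ t := by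
  obtain ⟨hd1, hdb⟩ := Finset.mem_Ico.1 hd
  obtain ⟨he1, heb⟩ := Finset.mem_Ico.1 he
  have hb1 : (1 : ℝ) < b := Nat.one_lt_cast.2 (by lia)
  have hpow : 0 < (b : ℝ) ^ k := zpow_pos (by positivity) k
  have hlower : (b : ℝ) ^ (0 : ℤ) < (b : ℝ) ^ (k + 1) := calc
    (b : ℝ) ^ (0 : ℤ) = 1 := zpow_zero _
    _ ≤ e * (a : ℝ) ^ t := mod_cast Nat.mul_pos he1 (pow_pos ha t)
    _ = d * (b : ℝ) ^ k := h
    _ < b * (b : ℝ) ^ k := by gcongr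
    _ = (b : ℝ) ^ (k + 1) := by rw [zpow_add_one₀ (by positivity), mul_comm]
  have hupper : (b : ℝ) ^ k < (b : ℝ) ^ (t + 1 : ℤ) := calc
    (b : ℝ) ^ k ≤ d * (b : ℝ) ^ k := le_mul_of_one_le_left hpow.le (Nat.one_le_cast.2 hd1)
    _ = e * (a : ℝ) ^ t := h.symm
    _ < b * (a : ℝ) ^ t := by gcongr
    _ ≤ b * (b : ℝ) ^ t := by gcongr
    _ = (b : ℝ) ^ (t + 1 : ℤ) := by rw [zpow_add_one₀ (by positivity), zpow_natCast, mul_comm]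
  have := (zpow_lt_zpow_iff_right₀ hb1).1 hlower
  have := (zpow_lt_zpow_iff_right₀ hb1).1 hupper
  lia

theorem lt_of_mul_pow_eq_mul_pow (ha : 0 < a) (hab : a ≤ b) (heb : e < b) (ht : t ≠ 0)
    (h : e * a ^ t = d * b ^ t) : d < a := by
  obtain ⟨u, rfl⟩ := Nat.exists_eq_succ_of_ne_zero ht
  by_contra! had
  refine lt_irrefl (d * b ^ (u + 1)) ?_
  calc d * b ^ (u + 1) = e * a ^ (u + 1) := h.symm
    _ < b * a ^ (u + 1) := by gcongr
    _ = a ^ u * (a * b) := by ring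
    _ ≤ b ^ u * (d * b) := by gcongr
    _ = d * b ^ (u + 1) := by ring

theorem mem_redundantDigits_of_mul_pow_eq_mul_zpow (hsf : Squarefree b) (ha : 0 < a)
    (hab : a ≤ b) (ht : t ≠ 0) (hd : d ∈ Finset.Ico 1 b) (he : e ∈ Finset.Ico 1 b) {k : ℤ}
    (h : (e : ℝ) * a ^ t = d * (b : ℝ) ^ k) : d ∈ redundantDigits a b := by
  obtain ⟨hk, hkt⟩ := nonneg_and_le_of_mul_pow_eq_mul_zpow ha hab hd he h
  lift k to ℕ using hk
  rw [zpow_natCast] at h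
  norm_cast at h hkt
  refine Finset.mem_filter.2 ⟨hd, ?_⟩
  have hdvd : a ^ t ∣ d * b ^ k := Dvd.intro_left e h
  rcases hkt.lt_or_eq with hlt | rfl
  · exact Or.inl (dvd_of_pow_succ_dvd_mul_pow hsf ((pow_dvd_pow a hlt).trans hdvd))
  · exact Or.inr ⟨lt_of_mul_pow_eq_mul_pow ha hab (Finset.mem_Ico.1 he).2 ht h,
      dvd_mul_of_pow_dvd_mul_pow ht hdvd⟩

theorem exists_mul_eq_mul_zpow_of_mem_redundantDigits (hd : d ∈ redundantDigits a b) :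
    ∃ e ∈ Finset.Ico 1 b, ∃ k : ℤ, (e : ℝ) * a = d * (b : ℝ) ^ k := by
  simp only [redundantDigits, Finset.mem_filter, Finset.mem_Ico] at hd
  obtain ⟨⟨hd1, hdb⟩, ⟨e, rfl⟩ | ⟨hda, e, he⟩⟩ := hd
  · have ha : 0 < a := Nat.pos_of_mul_pos_right hd1
    have he : 0 < e := Nat.pos_of_mul_pos_left hd1
    refine ⟨e, Finset.mem_Ico.2 ⟨he, (Nat.le_mul_of_pos_left e ha).trans_lt hdb⟩, 0, ?_⟩
    rw [zpow_zero, mul_one, Nat.cast_mul, mul_comm]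
  · refine ⟨e, Finset.mem_Ico.2 ⟨?_, ?_⟩, 1, ?_⟩
    · have : 0 < a * e := he ▸ Nat.mul_pos hd1 (by lia)
      exact Nat.pos_of_mul_pos_left this
    · refine Nat.lt_of_mul_lt_mul_left (a := a) ?_
      rw [← he]
      gcongr
      lia
    · rw [zpow_one, mul_comm]
      exact_mod_cast he.symm

theorem breakpoint_mem_breakpoints_iff (hsf : Squarefree b) (ha : 0 < a) (hab : a ≤ b)
    (hn : n ≠ 0) (hd : d ∈ Finset.Ico 1 b) :
    breakpoint a b n d ∈ breakpoints a b n ↔ d ∈ redundantDigits a b := by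
  have ha0 : (0 : ℝ) < a := Nat.cast_pos.2 ha
  have hb : 1 < b := by
    have := Finset.mem_Ico.1 hd
    lia
  rw [mem_breakpoints]
  constructor
  · rintro ⟨i, hi, e, he, heq⟩
    obtain ⟨t, rfl⟩ := Nat.exists_eq_add_of_lt hi
    obtain ⟨k, hk⟩ := (breakpoint_eq_breakpoint_iff ha0 hb hd (t + 1)).1 heq.symm
    exact mem_redundantDigits_of_mul_pow_eq_mul_zpow hsf ha hab t.succ_ne_zero hd he hk
  · intro hred
    obtain ⟨m, rfl⟩ := Nat.exists_eq_succ_of_ne_zero hn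
    obtain ⟨e, he, k, hk⟩ := exists_mul_eq_mul_zpow_of_mem_redundantDigits hred
    refine ⟨m, m.lt_succ_self, e, he, ?_⟩
    exact ((breakpoint_eq_breakpoint_iff ha0 hb hd 1).2 ⟨k, by rwa [pow_one]⟩).symm

theorem breakpoints_inter_image_breakpoint (hsf : Squarefree b) (ha : 0 < a) (hab : a ≤ b)
    (hn : n ≠ 0) :
    breakpoints a b n ∩ (Finset.Ico 1 b).image (breakpoint a b n) =
      (redundantDigits a b).image (breakpoint a b n) := by
  have hred : redundantDigits a b =
      {d ∈ Finset.Ico 1 b | breakpoint a b n d ∈ breakpoints a b n} := by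
    ext d
    rw [Finset.mem_filter]
    refine ⟨fun hd ↦ ?_, fun hd ↦ (breakpoint_mem_breakpoints_iff hsf ha hab hn hd.1).1 hd.2⟩
    have hd' := Finset.filter_subset _ _ hd
    exact ⟨hd', (breakpoint_mem_breakpoints_iff hsf ha hab hn hd').2 hd⟩
  rw [hred, Finset.inter_comm, ← Finset.filter_mem_eq_inter, Finset.filter_image]

theorem card_breakpoints_succ (hsf : Squarefree b) (ha : 0 < a) (hab : a ≤ b) (hb : 1 < b)
    (hn : n ≠ 0) :
    #(breakpoints a b (n + 1)) + ((b - 1) / a + (a.gcd b - 1)) =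
      #(breakpoints a b n) + (b - 1) := by
  have ha0 : (0 : ℝ) < a := Nat.cast_pos.2 ha
  have hcard : #((redundantDigits a b).image (breakpoint a b n)) =
      (b - 1) / a + (a.gcd b - 1) := by
    rw [Finset.card_image_of_injOn, card_redundantDigits ha hab]
    exact (breakpoint_injOn ha0 hb n).mono (Finset.coe_subset.2 (Finset.filter_subset _ _))
  rw [← hcard, ← breakpoints_inter_image_breakpoint hsf ha hab hn, breakpoints_succ,
    Finset.card_union_add_card_inter, card_image_breakpoint ha0 hb]

end RedundantDigits

/-- For squarefree `b ≥ 5` and an integer `a` with `1 < a < b` which is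
not an integral power of `b`,
`p_{a,b}(n) = (b - ⌊(b-1)/a⌋ - gcd(a,b))·n + ⌊(b-1)/a⌋ + gcd(a,b) - 1`. -/
theorem blockComplexity_int_lt (b a : ℕ) (hb : 5 ≤ b) (hsf : Squarefree b)
    (ha1 : 1 < a) (ha2 : a < b) (hnp : ∀ j : ℕ, a ≠ b ^ j) :
    ∀ n : ℕ, 1 ≤ n →
      (blockComplexity (a : ℝ) b n : ℤ) =
        ((b : ℤ) - ((b - 1) / a : ℕ) - (Nat.gcd a b : ℕ)) * n +
          (((b - 1) / a : ℕ) + (Nat.gcd a b : ℕ) - 1) := by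
  intro n hn
  have ha : (0 : ℝ) < a := by positivity
  have hirr : Irrational (Real.logb b a) :=
    irrational_logb_of_squarefree ha1 (by lia) hsf hnp
  rw [blockComplexity_eq_card_breakpoints ha (by lia) hirr (by lia)]
  have hgcd : 0 < Nat.gcd a b := Nat.gcd_pos_of_pos_left b (by lia)
  induction n, hn using Nat.le_induction with
  | base =>
    rw [card_breakpoints_one ha (by lia), Nat.cast_sub (by lia)]
    push_cast
    ring
  | succ n hn ih =>
    have hstep := card_breakpoints_succ hsf (by lia) ha2.le (by lia) (n := n) (by lia)
    zify [hgcd, show 1 ≤ b by lia] at hstep ih ⊢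
    linear_combination hstep + ih
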